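/- arXiv:1404.1809 — 6 statements merged into one kernel-verified Lean document; each statement's English description precedes it below -/
import Mathlib

section
/- Let p be a prime, K a perfect field of characteristic p, W = 𝕎(K) the ring of p-typical Witt vectors, and σ the Witt vector Frobenius. A 3×3 matrix A over W satisfies both A * F = F * A^σ and A^σ * V = V * A if and only if there exist a, b, c ∈ W with σ³(a) = a, σ³(b) = b, σ³(c) = c such that A = !![a, p·σ(b), p·σ(c); σ(σ(c)), σ(a), p·σ(σ(b)); b, c, σ(σ(a))]; that is, if and only if A belongs to R. -/
open Matrix

/-- The Witt vector Frobenius `σ` on `W = 𝕎(K)`. -/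
noncomputable def wittFrob (p : ℕ) [Fact p.Prime] (K : Type*) [CommRing K] :
    WittVector p K →+* WittVector p K :=
  WittVector.frobenius

/-- The matrix of Frobenius on the Dieudonné module of `H_{2,1}`. -/
noncomputable def Fmat (p : ℕ) [Fact p.Prime] (K : Type*) [CommRing K] :
    Matrix (Fin 3) (Fin 3) (WittVector p K) :=
  !![0, 0, (p : WittVector p K); 1, 0, 0; 0, 1, 0]

/-- The matrix of Verschiebung on the Dieudonné module of `H_{2,1}`. -/
noncomputable def Vmat (p : ℕ) [Fact p.Prime] (K : Type*) [CommRing K] :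
    Matrix (Fin 3) (Fin 3) (WittVector p K) :=
  !![0, (p : WittVector p K), 0; 0, 0, (p : WittVector p K); 1, 0, 0]

/-- The set `R` of matrices `!![a, p·σ(b), p·σ(c); σ²(c), σ(a), p·σ²(b); b, c, σ²(a)]`
with `σ³(a) = a`, `σ³(b) = b`, `σ³(c) = c`. -/
noncomputable def Rset (p : ℕ) [Fact p.Prime] (K : Type*) [CommRing K] :
    Set (Matrix (Fin 3) (Fin 3) (WittVector p K)) :=
  {A | ∃ a b c : WittVector p K,
    wittFrob p K (wittFrob p K (wittFrob p K a)) = a ∧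
    wittFrob p K (wittFrob p K (wittFrob p K b)) = b ∧
    wittFrob p K (wittFrob p K (wittFrob p K c)) = c ∧
    A = !![a, (p : WittVector p K) * wittFrob p K b, (p : WittVector p K) * wittFrob p K c;
           wittFrob p K (wittFrob p K c), wittFrob p K a,
             (p : WittVector p K) * wittFrob p K (wittFrob p K b);
           b, c, wittFrob p K (wittFrob p K a)]}

/-!
The matrix `F` is fixed by `σ` and satisfies `F³ = p`, so iterating `A F = F A^σ` three times gives
`p A = p A^(σ³)`. As `p` is not a zero divisor in `W`, every entry of `A` is fixed by `σ³`, and the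
shape of `A` can then be read off from the entries of `A F = F A^σ`. The condition on `V` is
automatic: `F` is left regular and `F V = p` is central.
-/

section SemiconjBy

theorem semiconjBy_swap_of_commute_mul {M : Type*} [Semigroup M] {f v x y : M}
    (hf : IsLeftRegular f) (hfv : Commute (f * v) y) (h : SemiconjBy f x y) :
    SemiconjBy v y x :=
  hf <| calc
    f * (v * y) = y * (f * v) := by rw [← mul_assoc, hfv.eq]
    _ = f * (x * v) := by rw [← mul_assoc, ← h.eq, mul_assoc]

variable {M T : Type*} [Monoid M] [FunLike T M M] [MonoidHomClass T M M] {τ : T} {f a : M}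

theorem semiconjBy_pow_iterate (hτ : τ f = f) (h : SemiconjBy f (τ a) a) (n : ℕ) :
    SemiconjBy (f ^ n) (τ^[n] a) a := by
  induction n with
  | zero => simp only [pow_zero, Function.iterate_zero_apply, SemiconjBy.one_left]
  | succ n ih =>
    have hstep : SemiconjBy (f ^ n) (τ^[n + 1] a) (τ a) := by
      simpa only [map_pow, hτ, ← Function.iterate_succ_apply' τ] using ih.map τ
    simpa only [pow_succ'] using h.mul_left hstep

theorem iterate_eq_self_of_semiconjBy (hf : IsLeftRegular f) (hτ : τ f = f)
    (h : SemiconjBy f (τ a) a) {n : ℕ} (hn : Commute (f ^ n) a) : τ^[n] a = a :=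
  hf.pow n <| (semiconjBy_pow_iterate hτ h n).eq.trans hn.eq.symm

end SemiconjBy

section DieudonneMatrices

variable (p : ℕ) [Fact p.Prime] (K : Type*) [CommRing K]

theorem Fmat_map_wittFrob : (Fmat p K).map (wittFrob p K) = Fmat p K := by
  ext1 i j
  fin_cases i <;> fin_cases j <;> simp [Fmat]

theorem Fmat_mul_Vmat : Fmat p K * Vmat p K = (p : Matrix (Fin 3) (Fin 3) (WittVector p K)) := by
  ext1 i j
  fin_cases i <;> fin_cases j <;>
    simp [Fmat, Vmat, Matrix.mul_apply, Fin.sum_univ_three, Matrix.natCast_apply]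

theorem Fmat_sq : Fmat p K ^ 2 = Vmat p K := by
  ext1 i j
  fin_cases i <;> fin_cases j <;>
    simp [Fmat, Vmat, pow_two, Matrix.mul_apply, Fin.sum_univ_three]

theorem Fmat_pow_three : Fmat p K ^ 3 = (p : Matrix (Fin 3) (Fin 3) (WittVector p K)) := by
  rw [pow_succ', Fmat_sq, Fmat_mul_Vmat]

theorem det_Fmat : (Fmat p K).det = p := by
  simp [Fmat, Matrix.det_fin_three]

theorem wittVector_frobenius_injective [CharP K p] [IsReduced K] :
    Function.Injective (WittVector.frobenius : WittVector p K → WittVector p K) := by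
  have : ExpChar K p := ExpChar.prime Fact.out
  intro x y hxy
  ext n
  apply frobenius_inj K p
  simpa only [frobenius_def, WittVector.coeff_frobenius_charP] using
    congrArg (WittVector.coeff · n) hxy

theorem isLeftRegular_natCast_wittVector [CharP K p] [IsReduced K] :
    IsLeftRegular (p : WittVector p K) := by
  intro x y hxy
  apply wittVector_frobenius_injective p K
  apply WittVector.verschiebung_injective p K
  simpa only [WittVector.verschiebung_frobenius, mul_comm] using hxy

theorem isLeftRegular_Fmat [CharP K p] [IsReduced K] : IsLeftRegular (Fmat p K) := by
  refine (Matrix.isRegular_of_isLeftRegular_det ?_).left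
  rw [det_Fmat]
  exact isLeftRegular_natCast_wittVector p K

end DieudonneMatrices

section Endomorphisms

variable {p : ℕ} [Fact p.Prime] {K : Type*} [CommRing K]
  {A : Matrix (Fin 3) (Fin 3) (WittVector p K)}

theorem mul_Fmat_eq_Fmat_mul_map_iff :
    A * Fmat p K = Fmat p K * A.map (wittFrob p K) ↔
      (A 0 1 = p * wittFrob p K (A 2 0) ∧ A 0 2 = p * wittFrob p K (A 2 1) ∧
          p * A 0 0 = p * wittFrob p K (A 2 2)) ∧
        (A 1 1 = wittFrob p K (A 0 0) ∧ A 1 2 = wittFrob p K (A 0 1) ∧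
          p * A 1 0 = wittFrob p K (A 0 2)) ∧
        (A 2 1 = wittFrob p K (A 1 0) ∧ A 2 2 = wittFrob p K (A 1 1) ∧
          p * A 2 0 = wittFrob p K (A 1 2)) := by
  simp [← Matrix.ext_iff, Fin.forall_fin_succ, Fin.sum_univ_three, Fmat, Matrix.mul_apply,
    mul_comm, -Matrix.cons_mul]

theorem mem_Rset_iff :
    A ∈ Rset p K ↔ A * Fmat p K = Fmat p K * A.map (wittFrob p K) ∧
      (wittFrob p K).mapMatrix^[3] A = A := by
  have hp : wittFrob p K p = p := map_natCast _ p
  rw [mul_Fmat_eq_Fmat_mul_map_iff]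
  constructor
  · rintro ⟨a, b, c, ha, hb, hc, rfl⟩
    refine ⟨by simp [ha, hb, hc, hp], ?_⟩
    ext1 i j
    fin_cases i <;> fin_cases j <;> simp [ha, hb, hc, hp]
  · rintro ⟨⟨⟨h01, h02, -⟩, ⟨h11, h12, -⟩, ⟨h21, h22, -⟩⟩, hA⟩
    have hσ (i j : Fin 3) : wittFrob p K (wittFrob p K (wittFrob p K (A i j))) = A i j :=
      congrFun (congrFun hA i) j
    refine ⟨A 0 0, A 2 0, A 2 1, hσ 0 0, hσ 2 0, hσ 2 1, ?_⟩
    have h10 : A 1 0 = wittFrob p K (wittFrob p K (A 2 1)) := by rw [h21, hσ]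
    have h12_eq : A 1 2 = p * wittFrob p K (wittFrob p K (A 2 0)) := by rw [h12, h01, map_mul, hp]
    have h22_eq : A 2 2 = wittFrob p K (wittFrob p K (A 0 0)) := by rw [h22, h11]
    rw [← h22_eq, ← h12_eq, ← h11, ← h10, ← h02, ← h01]
    exact Matrix.eta_fin_three A

theorem map_wittFrob_iterate_three [CharP K p] [IsReduced K]
    (h : A * Fmat p K = Fmat p K * A.map (wittFrob p K)) :
    (wittFrob p K).mapMatrix^[3] A = A := by
  refine iterate_eq_self_of_semiconjBy (τ := (wittFrob p K).mapMatrix)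
    (isLeftRegular_Fmat p K) (Fmat_map_wittFrob p K) h.symm ?_
  rw [Fmat_pow_three]
  exact Nat.cast_commute p A

theorem map_wittFrob_mul_Vmat [CharP K p] [IsReduced K]
    (h : A * Fmat p K = Fmat p K * A.map (wittFrob p K)) :
    A.map (wittFrob p K) * Vmat p K = Vmat p K * A := by
  refine (semiconjBy_swap_of_commute_mul (isLeftRegular_Fmat p K) ?_ h.symm).eq.symm
  rw [Fmat_mul_Vmat]
  exact Nat.cast_commute p A

end Endomorphisms

theorem stmt_2_general (p : ℕ) [Fact p.Prime] (K : Type*) [CommRing K] [CharP K p] [IsReduced K]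
    (A : Matrix (Fin 3) (Fin 3) (WittVector p K)) :
    (A * Fmat p K = Fmat p K * A.map (wittFrob p K) ∧
      A.map (wittFrob p K) * Vmat p K = Vmat p K * A) ↔ A ∈ Rset p K := by
  rw [mem_Rset_iff]
  constructor
  · rintro ⟨hF, -⟩
    exact ⟨hF, map_wittFrob_iterate_three hF⟩
  · rintro ⟨hF, -⟩
    exact ⟨hF, map_wittFrob_mul_Vmat hF⟩

/-- A `3×3` matrix `A` over `W = 𝕎(K)` satisfies `A·F = F·Aᵠ` and `Aᵠ·V = V·A`
(entrywise Frobenius `σ`) if and only if `A ∈ R`. -/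
theorem stmt_2 (p : ℕ) [Fact p.Prime] (K : Type*) [Field K] [CharP K p] [PerfectRing K p]
    (A : Matrix (Fin 3) (Fin 3) (WittVector p K)) :
    (A * Fmat p K = Fmat p K * A.map (wittFrob p K) ∧
      A.map (wittFrob p K) * Vmat p K = Vmat p K * A) ↔ A ∈ Rset p K :=
  stmt_2_general p K A
end

section
/- Let p be a prime, K a perfect field of characteristic p, W = 𝕎(K) the ring of p-typical Witt vectors, and σ the Witt vector Frobenius. The set R of matrices !![a, p·σ(b), p·σ(c); σ(σ(c)), σ(a), p·σ(σ(b)); b, c, σ(σ(a))], with a, b, c ∈ W satisfying σ³(a) = a, σ³(b) = b, σ³(c) = c, is a subring of the ring of 3×3 matrices over W (it contains 0 and the identity matrix and is closed under addition, negation and matrix multiplication). -/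
open Matrix

/-!
Let `F = !![0, 0, p; 1, 0, 0; 0, 1, 0]` and let `D a = diag(a, σ(a), σ²(a))` for `a` in the subring
fixed by `σ³`. Then `F * D a = D (σ² a) * F` and `F³ = D p`, and `R` consists of the matrices
`D a + D (σ c) * F + D (σ b) * F²`. So `R` is the left span of `1, F, F²` over the subring of all
`D a`; moving powers of `F` to the right past the `D a` and using `F³ = D p` to lower exponents
shows that such a span is closed under multiplication.
-/

section TwistedPowerSpan

variable {M : Type*} [Ring M] {S : Subring M} {F : M} {n : ℕ}

/-- The left `S`-submodule of `M` spanned by `1, F, …, F ^ (n - 1)`. It is the underlying module of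
the cyclic orders `twistedPowerSubring`. -/
def powerSpan (S : Subring M) (F : M) (n : ℕ) : Submodule S M :=
  Submodule.span S (Set.range fun i : Fin n => F ^ (i : ℕ))

theorem pow_mem_powerSpan {i : ℕ} (hi : i < n) : F ^ i ∈ powerSpan S F n :=
  Submodule.subset_span ⟨⟨i, hi⟩, rfl⟩

theorem pow_succ_mem_powerSpan (hFn : F ^ n ∈ S) {i : ℕ} (hi : i < n) :
    F ^ (i + 1) ∈ powerSpan S F n := by
  obtain hlt | rfl : i + 1 < n ∨ i + 1 = n := by omega
  · exact pow_mem_powerSpan hlt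
  · have hone : F ^ 0 ∈ powerSpan S F (i + 1) := pow_mem_powerSpan i.succ_pos
    simpa [Subring.smul_def] using Submodule.smul_mem _ (⟨F ^ (i + 1), hFn⟩ : S) hone

theorem generator_mul_mem_powerSpan (hFS : ∀ a ∈ S, ∃ b ∈ S, F * a = b * F) (hFn : F ^ n ∈ S)
    {y : M} (hy : y ∈ powerSpan S F n) : F * y ∈ powerSpan S F n := by
  induction hy using Submodule.span_induction with
  | mem _ hx =>
    obtain ⟨i, rfl⟩ := hx
    simpa only [pow_succ'] using pow_succ_mem_powerSpan hFn i.isLt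
  | zero => simp only [mul_zero, zero_mem]
  | add _ _ _ _ hx hy => simpa only [mul_add] using add_mem hx hy
  | smul a x _ hx =>
    obtain ⟨b, hb, hab⟩ := hFS a a.2
    have hmove : F * (a • x) = (⟨b, hb⟩ : S) • (F * x) := by
      simp only [Subring.smul_def, smul_eq_mul, ← mul_assoc, hab]
    exact hmove ▸ Submodule.smul_mem _ _ hx

theorem pow_mul_mem_powerSpan (hFS : ∀ a ∈ S, ∃ b ∈ S, F * a = b * F) (hFn : F ^ n ∈ S)
    (i : ℕ) {y : M} (hy : y ∈ powerSpan S F n) : F ^ i * y ∈ powerSpan S F n := by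
  induction i with
  | zero => simpa only [pow_zero, one_mul] using hy
  | succ i ih => simpa only [pow_succ', mul_assoc] using generator_mul_mem_powerSpan hFS hFn ih

theorem mul_mem_powerSpan (hFS : ∀ a ∈ S, ∃ b ∈ S, F * a = b * F) (hFn : F ^ n ∈ S)
    {x y : M} (hx : x ∈ powerSpan S F n) (hy : y ∈ powerSpan S F n) :
    x * y ∈ powerSpan S F n := by
  induction hx using Submodule.span_induction with
  | mem _ hx =>
    obtain ⟨i, rfl⟩ := hx
    exact pow_mul_mem_powerSpan hFS hFn i hy
  | zero => simp only [zero_mul, zero_mem]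
  | add _ _ _ _ hx hx' => simpa only [add_mul] using add_mem hx hx'
  | smul a _ _ hx => simpa only [smul_mul_assoc] using Submodule.smul_mem _ a hx

/-- The cyclic order `S + S F + ⋯ + S F ^ (n - 1)`, for an element `F` that normalises `S` in the
sense that `F S ⊆ S F` and has its `n`-th power in `S`. -/
def twistedPowerSubring (hn : 0 < n) (hFS : ∀ a ∈ S, ∃ b ∈ S, F * a = b * F)
    (hFn : F ^ n ∈ S) : Subring M :=
  { (powerSpan S F n).toAddSubgroup with
    one_mem' := pow_zero F ▸ pow_mem_powerSpan hn
    mul_mem' := mul_mem_powerSpan hFS hFn }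

end TwistedPowerSpan

section FrobeniusMatrix

variable {W : Type*} [CommRing W] (σ : W →+* W) (π : W)

/-- The subring `W^{σ³}`, the coefficient ring of the entries of `R`. -/
def cubeFixedSubring : Subring W :=
  (σ ^ 3).eqLocus (RingHom.id W)

variable {σ} in
theorem mem_cubeFixedSubring {a : W} : a ∈ cubeFixedSubring σ ↔ σ (σ (σ a)) = a :=
  Iff.rfl

variable {σ} in
theorem map_mem_cubeFixedSubring {a : W} (ha : a ∈ cubeFixedSubring σ) :
    σ a ∈ cubeFixedSubring σ :=
  congrArg σ ha

/-- The embedding `a ↦ diag(a, σ(a), …, σⁿ⁻¹(a))` of `W` into matrices. On `W^{σⁿ}` it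
turns conjugation by a cyclic shift into a power of `σ`. -/
def orbitDiagonal (n : ℕ) : W →+* Matrix (Fin n) (Fin n) W :=
  (diagonalRingHom (Fin n) W).comp (RingHom.pi fun i => σ ^ (i : ℕ))

theorem orbitDiagonal_three (a : W) :
    orbitDiagonal σ 3 a = !![a, 0, 0; 0, σ a, 0; 0, 0, σ (σ a)] := by
  ext i j
  fin_cases i <;> fin_cases j <;> simp [orbitDiagonal]

/-- The matrix of Frobenius on the Dieudonné module of `H_{2,1}`, with a parameter `π` in place
of `p`. -/
def frobeniusMatrix : Matrix (Fin 3) (Fin 3) W :=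
  !![0, 0, π; 1, 0, 0; 0, 1, 0]

/-- The right-hand side is the matrix of Verschiebung. -/
theorem frobeniusMatrix_sq : frobeniusMatrix π ^ 2 = !![0, π, 0; 0, 0, π; 1, 0, 0] := by
  simp [frobeniusMatrix, pow_two]

variable {σ π}

theorem frobeniusMatrix_pow_three (hπ : σ π = π) :
    frobeniusMatrix π ^ 3 = orbitDiagonal σ 3 π := by
  rw [pow_succ, frobeniusMatrix_sq]
  simp [orbitDiagonal_three, hπ, frobeniusMatrix]

theorem frobeniusMatrix_mul_orbitDiagonal {a : W} (ha : a ∈ cubeFixedSubring σ) :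
    frobeniusMatrix π * orbitDiagonal σ 3 a =
      orbitDiagonal σ 3 (σ (σ a)) * frobeniusMatrix π := by
  simp [orbitDiagonal_three, frobeniusMatrix, mem_cubeFixedSubring.1 ha, mul_comm]

theorem orbitDiagonal_add_mul_frobeniusMatrix {b c : W} (hb : b ∈ cubeFixedSubring σ)
    (hc : c ∈ cubeFixedSubring σ) (a : W) :
    orbitDiagonal σ 3 a + orbitDiagonal σ 3 (σ c) * frobeniusMatrix π +
        orbitDiagonal σ 3 (σ b) * frobeniusMatrix π ^ 2 =
      !![a, π * σ b, π * σ c; σ (σ c), σ a, π * σ (σ b); b, c, σ (σ a)] := by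
  rw [frobeniusMatrix_sq]
  simp [orbitDiagonal_three, frobeniusMatrix, mem_cubeFixedSubring.1 hb,
    mem_cubeFixedSubring.1 hc, mul_comm]

theorem mem_powerSpan_frobeniusMatrix {A : Matrix (Fin 3) (Fin 3) W} :
    A ∈ powerSpan ((cubeFixedSubring σ).map (orbitDiagonal σ 3)) (frobeniusMatrix π) 3 ↔
      ∃ a b c : W, σ (σ (σ a)) = a ∧ σ (σ (σ b)) = b ∧ σ (σ (σ c)) = c ∧
        A = !![a, π * σ b, π * σ c; σ (σ c), σ a, π * σ (σ b); b, c, σ (σ a)] := by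
  simp only [powerSpan, Submodule.mem_span_range_iff_exists_fun, Fin.sum_univ_three,
    Subring.smul_def, smul_eq_mul]
  constructor
  · rintro ⟨x, rfl⟩
    obtain ⟨a, ha, hxa⟩ := (x 0).2
    obtain ⟨u, hu, hxu⟩ := (x 1).2
    obtain ⟨v, hv, hxv⟩ := (x 2).2
    have hc := map_mem_cubeFixedSubring (map_mem_cubeFixedSubring hu)
    have hb := map_mem_cubeFixedSubring (map_mem_cubeFixedSubring hv)
    refine ⟨a, σ (σ v), σ (σ u), ha, hb, hc, ?_⟩
    rw [← orbitDiagonal_add_mul_frobeniusMatrix hb hc a, mem_cubeFixedSubring.1 hu,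
      mem_cubeFixedSubring.1 hv, hxa, hxu, hxv]
    simp
  · rintro ⟨a, b, c, ha, hb, hc, rfl⟩
    refine ⟨![⟨_, a, ha, rfl⟩, ⟨_, σ c, map_mem_cubeFixedSubring hc, rfl⟩,
      ⟨_, σ b, map_mem_cubeFixedSubring hb, rfl⟩], ?_⟩
    rw [← orbitDiagonal_add_mul_frobeniusMatrix hb hc a]
    simp

/-- The order `D(W^{σ³}) + D(W^{σ³}) F + D(W^{σ³}) F²` of `3 × 3` matrices, where `D` is
`orbitDiagonal σ 3` and `F` is `frobeniusMatrix π`. For the Witt vector Frobenius and `π = p` it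
is `R`. -/
def frobeniusOrder (hπ : σ π = π) : Subring (Matrix (Fin 3) (Fin 3) W) :=
  twistedPowerSubring (S := (cubeFixedSubring σ).map (orbitDiagonal σ 3))
    (F := frobeniusMatrix π) three_pos
    (by
      rintro _ ⟨a, ha, rfl⟩
      exact ⟨_, ⟨_, map_mem_cubeFixedSubring (map_mem_cubeFixedSubring ha), rfl⟩,
        frobeniusMatrix_mul_orbitDiagonal ha⟩)
    ⟨π, mem_cubeFixedSubring.2 (by simp only [hπ]), (frobeniusMatrix_pow_three hπ).symm⟩

end FrobeniusMatrix

theorem stmt_3_general (p : ℕ) [Fact p.Prime] (K : Type*) [CommRing K] :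
    ∃ S : Subring (Matrix (Fin 3) (Fin 3) (WittVector p K)),
      (S : Set (Matrix (Fin 3) (Fin 3) (WittVector p K))) = Rset p K :=
  ⟨frobeniusOrder (map_natCast (wittFrob p K) p), Set.ext fun _ => mem_powerSpan_frobeniusMatrix⟩

/-- The set `R` is a subring of the ring of `3×3` matrices over `W = 𝕎(K)`:
it contains `0` and `1` and is closed under addition, negation and multiplication. -/
theorem stmt_3 (p : ℕ) [Fact p.Prime] (K : Type*) [Field K] [CharP K p] [PerfectRing K p] :
    ∃ S : Subring (Matrix (Fin 3) (Fin 3) (WittVector p K)),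
      (S : Set (Matrix (Fin 3) (Fin 3) (WittVector p K))) = Rset p K :=
  stmt_3_general p K
end

section
/- Let p be a prime and K a field of characteristic p. A 3×3 matrix Ā over K satisfies both Ā * F̄ = F̄ * Ā^φ and Ā^φ * V̄ = V̄ * Ā if and only if there exist a, b, c ∈ K with a^(p^3) = a such that Ā = !![a, 0, 0; b, a^p, 0; c, b^p, a^(p^2)]. -/
open Matrix

/-- The matrix of Frobenius on the Dieudonné module of `H_{2,1}[p]`. -/
def FmatBar (K : Type*) [CommRing K] : Matrix (Fin 3) (Fin 3) K :=
  !![0, 0, 0; 1, 0, 0; 0, 1, 0]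

/-- The matrix of Verschiebung on the Dieudonné module of `H_{2,1}[p]`. -/
def VmatBar (K : Type*) [CommRing K] : Matrix (Fin 3) (Fin 3) K :=
  !![0, 0, 0; 0, 0, 0; 1, 0, 0]

/-! The twisted relation with `F̄` says that applying `φ` to an entry of `Ā` gives the next entry
down its diagonal, and that the top row vanishes off the corner. So the first column determines
`Ā`, which is lower triangular because `φ(0) = 0`. For such a matrix the relation with `V̄`
compares only the two ends of the main diagonal, giving `φ³(a) = a`. -/

section

variable {R : Type*} [CommRing R]

theorem mul_FmatBar (A : Matrix (Fin 3) (Fin 3) R) :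
    A * FmatBar R = !![A 0 1, A 0 2, 0; A 1 1, A 1 2, 0; A 2 1, A 2 2, 0] := by
  ext i j
  fin_cases i <;> fin_cases j <;> simp [FmatBar, mul_apply, Fin.sum_univ_three]

theorem FmatBar_mul (A : Matrix (Fin 3) (Fin 3) R) :
    FmatBar R * A = !![0, 0, 0; A 0 0, A 0 1, A 0 2; A 1 0, A 1 1, A 1 2] := by
  ext i j
  fin_cases i <;> fin_cases j <;> simp [FmatBar, mul_apply, Fin.sum_univ_three]

theorem mul_VmatBar (A : Matrix (Fin 3) (Fin 3) R) :
    A * VmatBar R = !![A 0 2, 0, 0; A 1 2, 0, 0; A 2 2, 0, 0] := by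
  ext i j
  fin_cases i <;> fin_cases j <;> simp [VmatBar, mul_apply, Fin.sum_univ_three]

theorem VmatBar_mul (A : Matrix (Fin 3) (Fin 3) R) :
    VmatBar R * A = !![0, 0, 0; 0, 0, 0; A 0 0, A 0 1, A 0 2] := by
  ext i j
  fin_cases i <;> fin_cases j <;> simp [VmatBar, mul_apply, Fin.sum_univ_three]

theorem mul_FmatBar_eq_FmatBar_mul_iff (A B : Matrix (Fin 3) (Fin 3) R) :
    A * FmatBar R = FmatBar R * B ↔
      A = !![A 0 0, 0, 0; A 1 0, B 0 0, B 0 1; A 2 0, B 1 0, B 1 1] ∧ B 0 2 = 0 ∧ B 1 2 = 0 := by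
  rw [mul_FmatBar, FmatBar_mul]
  simp [← Matrix.ext_iff, Fin.forall_fin_succ, and_assoc, eq_comm (a := (0 : R)),
    and_left_comm (a := B 0 2 = 0)]

theorem mul_VmatBar_eq_VmatBar_mul_iff (A B : Matrix (Fin 3) (Fin 3) R) :
    A * VmatBar R = VmatBar R * B ↔
      A 0 2 = 0 ∧ A 1 2 = 0 ∧ A 2 2 = B 0 0 ∧ B 0 1 = 0 ∧ B 0 2 = 0 := by
  simp [mul_VmatBar, VmatBar_mul, eq_comm (a := (0 : R))]

variable {φ : R → R}

theorem mul_FmatBar_eq_FmatBar_mul_map_iff (hφ : φ 0 = 0) (A : Matrix (Fin 3) (Fin 3) R) :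
    A * FmatBar R = FmatBar R * A.map φ ↔
      ∃ a b c : R, A = !![a, 0, 0; b, φ a, 0; c, φ b, φ (φ a)] := by
  rw [mul_FmatBar_eq_FmatBar_mul_iff]
  constructor
  · rintro ⟨hA, -, -⟩
    have h01 : A 0 1 = 0 := congrFun₂ hA 0 1
    have h11 : A 1 1 = φ (A 0 0) := congrFun₂ hA 1 1
    refine ⟨A 0 0, A 1 0, A 2 0, hA.trans ?_⟩
    simp only [map_apply, h01, h11, hφ]
  · rintro ⟨a, b, c, rfl⟩
    simp [hφ]

theorem map_mul_VmatBar_eq_VmatBar_mul_iff (hφ : φ 0 = 0) {A : Matrix (Fin 3) (Fin 3) R}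
    (h01 : A 0 1 = 0) (h02 : A 0 2 = 0) (h12 : A 1 2 = 0) :
    A.map φ * VmatBar R = VmatBar R * A ↔ φ (A 2 2) = A 0 0 := by
  simp [mul_VmatBar_eq_VmatBar_mul_iff, h01, h02, h12, hφ]

theorem stmt_4_general (hφ : φ 0 = 0) (A : Matrix (Fin 3) (Fin 3) R) :
    (A * FmatBar R = FmatBar R * A.map φ ∧ A.map φ * VmatBar R = VmatBar R * A) ↔
      ∃ a b c : R, φ (φ (φ a)) = a ∧ A = !![a, 0, 0; b, φ a, 0; c, φ b, φ (φ a)] := by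
  rw [mul_FmatBar_eq_FmatBar_mul_map_iff hφ]
  constructor
  · rintro ⟨⟨a, b, c, rfl⟩, hV⟩
    exact ⟨a, b, c, (map_mul_VmatBar_eq_VmatBar_mul_iff hφ rfl rfl rfl).1 hV, rfl⟩
  · rintro ⟨a, b, c, ha, rfl⟩
    exact ⟨⟨a, b, c, rfl⟩, (map_mul_VmatBar_eq_VmatBar_mul_iff hφ rfl rfl rfl).2 ha⟩

end

/-- A `3×3` matrix `Ā` over a field `K` of characteristic `p` satisfies
`Ā·F̄ = F̄·Āᵠ` and `Āᵠ·V̄ = V̄·Ā` (entrywise `p`-th power `φ`) if and only if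
`Ā = !![a, 0, 0; b, a^p, 0; c, b^p, a^(p²)]` for some `a, b, c ∈ K` with
`a^(p³) = a`. -/
theorem stmt_4 (p : ℕ) [Fact p.Prime] (K : Type*) [Field K] [CharP K p]
    (A : Matrix (Fin 3) (Fin 3) K) :
    (A * FmatBar K = FmatBar K * A.map (· ^ p) ∧
      A.map (· ^ p) * VmatBar K = VmatBar K * A) ↔
    ∃ a b c : K, a ^ p ^ 3 = a ∧
      A = !![a, 0, 0; b, a ^ p, 0; c, b ^ p, a ^ p ^ 2] := by
  simpa only [← pow_mul, pow_succ, pow_zero, one_mul] using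
    stmt_4_general (φ := (· ^ p)) (zero_pow (Fact.out : p.Prime).ne_zero) A
end

section
/- Let p be a prime, K a perfect field of characteristic p, and W = 𝕎(K) the ring of p-typical Witt vectors, with Witt vector Frobenius σ. For every ā ∈ K with ā^(p^3) = ā and ā ≠ 0, there exists a matrix A belonging to R which is invertible in the ring of 3×3 matrices over W and whose image under the entrywise 0-th Witt component map W → K is the diagonal matrix !![ā, 0, 0; 0, ā^p, 0; 0, 0, ā^(p^2)]. (One may take A to be the diagonal matrix of Teichmüller representatives diag(teich(ā), teich(ā^p), teich(ā^(p^2))).) -/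
open Matrix

/-!
The Witt vector Frobenius sends a Teichmüller representative `[x]` to `[x ^ p]`. If
`x ^ p ^ 3 = x`, then `[x]` is fixed by the third power of Frobenius, so the element of `R` with
`a = [x]` and `b = c = 0` is the diagonal matrix with entries `[x]`, `[x ^ p]`, `[x ^ p ^ 2]`. It
lifts the diagonal matrix with entries `x`, `x ^ p`, `x ^ p ^ 2`, and it is invertible because
`x ↦ [x]` is multiplicative.
-/

section Teichmuller

variable {p : ℕ} [Fact p.Prime]

theorem frobenius_teichmuller_of_invertible {A : Type*} [CommRing A] [Invertible (p : A)] (x : A) :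
    WittVector.frobenius (WittVector.teichmuller p x) = WittVector.teichmuller p (x ^ p) := by
  apply (WittVector.ghostMap.bijective_of_invertible p A).injective
  funext n
  simp only [WittVector.ghostMap_apply, WittVector.ghostComponent_frobenius,
    WittVector.ghostComponent_teichmuller, ← pow_mul, pow_succ']

theorem wittVector_map_frobenius {A B : Type*} [CommRing A] [CommRing B] (f : A →+* B)
    (y : WittVector p A) :
    WittVector.map f (WittVector.frobenius y) = WittVector.frobenius (WittVector.map f y) := by
  ext n
  rw [WittVector.map_coeff, WittVector.coeff_frobenius, WittVector.coeff_frobenius]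
  exact MvPolynomial.comp_aeval_apply y.coeff f.toIntAlgHom _

variable {K : Type*} [CommRing K]

-- Ghost components need not determine a Witt vector over `K`, so the identity is proved over the
-- polynomial ring `ℤ[K] ⊆ ℚ[K]` and specialized along the counit `ℤ[K] → K`.
theorem frobenius_teichmuller (x : K) :
    WittVector.frobenius (WittVector.teichmuller p x) = WittVector.teichmuller p (x ^ p) := by
  have frobenius_teichmuller_polynomial (y : MvPolynomial K ℤ) :
      WittVector.frobenius (WittVector.teichmuller p y) = WittVector.teichmuller p (y ^ p) := by
    let toRat : MvPolynomial K ℤ →+* MvPolynomial K ℚ := MvPolynomial.map (Int.castRingHom ℚ)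
    have toRat_injective : Function.Injective toRat :=
      MvPolynomial.map_injective _ Int.cast_injective
    apply WittVector.map_injective toRat toRat_injective
    rw [wittVector_map_frobenius, WittVector.map_teichmuller, WittVector.map_teichmuller, map_pow,
      frobenius_teichmuller_of_invertible]
  have specialized := congrArg (WittVector.map (MvPolynomial.counit K))
    (frobenius_teichmuller_polynomial (.X x))
  rwa [wittVector_map_frobenius, WittVector.map_teichmuller, WittVector.map_teichmuller, map_pow,
    MvPolynomial.counit_X] at specialized

theorem wittFrob_teichmuller (x : K) :
    wittFrob p K (WittVector.teichmuller p x) = WittVector.teichmuller p (x ^ p) :=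
  frobenius_teichmuller x

theorem diagonal_mem_Rset {a : WittVector p K}
    (ha : wittFrob p K (wittFrob p K (wittFrob p K a)) = a) :
    diagonal ![a, wittFrob p K a, wittFrob p K (wittFrob p K a)] ∈ Rset p K := by
  refine ⟨a, 0, 0, ha, ?_, ?_, ?_⟩ <;> simp only [map_zero, mul_zero, diagonal_vec3]

theorem diagonal_teichmuller_mem_Rset {x : K} (hx : x ^ p ^ 3 = x) :
    diagonal (WittVector.teichmuller p ∘ ![x, x ^ p, x ^ p ^ 2]) ∈ Rset p K := by
  have frob_sq : wittFrob p K (wittFrob p K (WittVector.teichmuller p x)) =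
      WittVector.teichmuller p (x ^ p ^ 2) := by
    rw [wittFrob_teichmuller, wittFrob_teichmuller, ← pow_mul, ← sq]
  have frob_cube : wittFrob p K (wittFrob p K (wittFrob p K (WittVector.teichmuller p x))) =
      WittVector.teichmuller p x := by
    rw [frob_sq, wittFrob_teichmuller, ← pow_mul, ← pow_succ, hx]
  have mem := diagonal_mem_Rset frob_cube
  rw [frob_sq, wittFrob_teichmuller] at mem
  rwa [← FinVec.map_eq]

section Diagonal

variable {n : Type*} [DecidableEq n]

theorem isUnit_diagonal_teichmuller [Fintype n] {d : n → K} (hd : ∀ i, IsUnit (d i)) :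
    IsUnit (diagonal (WittVector.teichmuller p ∘ d)) :=
  isUnit_diagonal.mpr <| Pi.isUnit_iff.mpr fun i => (hd i).map (WittVector.teichmuller p)

theorem diagonal_teichmuller_map_coeff_zero (d : n → K) :
    (diagonal (WittVector.teichmuller p ∘ d)).map (fun x => x.coeff 0) = diagonal d :=
  calc
    _ = diagonal (fun i => (WittVector.teichmuller p (d i)).coeff 0) :=
      diagonal_map (f := fun x : WittVector p K => x.coeff 0) (WittVector.zero_coeff p K 0)
    _ = diagonal d := by simp only [WittVector.teichmuller_coeff_zero]

end Diagonal

end Teichmuller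

theorem stmt_7_general (p : ℕ) [Fact p.Prime] (K : Type*) [CommRing K]
    (abar : K) (h1 : abar ^ p ^ 3 = abar) (h2 : IsUnit abar) :
    ∃ A ∈ Rset p K, IsUnit A ∧
      A.map (fun x => x.coeff 0) = !![abar, 0, 0; 0, abar ^ p, 0; 0, 0, abar ^ p ^ 2] := by
  let d : Fin 3 → K := ![abar, abar ^ p, abar ^ p ^ 2]
  have isUnit_d : ∀ i, IsUnit (d i) :=
    Fin.forall_fin_succ.mpr ⟨h2, Fin.forall_fin_two.mpr ⟨h2.pow _, h2.pow _⟩⟩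
  refine ⟨diagonal (WittVector.teichmuller p ∘ d), diagonal_teichmuller_mem_Rset h1,
    isUnit_diagonal_teichmuller isUnit_d, ?_⟩
  rw [diagonal_teichmuller_map_coeff_zero, diagonal_vec3]

/-- For every `abar ∈ K` with `abar^(p³) = abar` and `abar ≠ 0`, there is an invertible matrix
`A ∈ R` whose entrywise `0`-th Witt component is the diagonal matrix
`diag(abar, abar^p, abar^(p²))`. -/
theorem stmt_7 (p : ℕ) [Fact p.Prime] (K : Type*) [Field K] [CharP K p] [PerfectRing K p]
    (abar : K) (h1 : abar ^ p ^ 3 = abar) (h2 : abar ≠ 0) :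
    ∃ A ∈ Rset p K, IsUnit A ∧
      A.map (fun x => x.coeff 0) = !![abar, 0, 0; 0, abar ^ p, 0; 0, 0, abar ^ p ^ 2] :=
  stmt_7_general p K abar h1 h2.isUnit
end

section
/- Let p be a prime and K a perfect field of characteristic p, with Frobenius automorphism σ(x) = x^p, and let τ : Kˣ → Kˣ be τ(a) = σ(a)·(σ⁻¹(a))⁻¹. For a ∈ Kˣ, let M_a be the K-vector space K × K equipped with the σ-semilinear map F(u,v) = (0, σ(u)) and the σ⁻¹-semilinear map V_a(u,v) = (0, a · σ⁻¹(u)). Then for a, a' ∈ Kˣ, there exists a K-linear bijection g : K × K → K × K satisfying g ∘ F = F ∘ g and g ∘ V_a = V_{a'} ∘ g if and only if a' · a⁻¹ lies in the image of τ. -/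
/-! Write `F`, `V` for the two operators.  A `K`-linear `g` with `g ∘ F = F ∘ g` must send
`F (1, 0) = (0, 1)` to `(0, σ b)`, where `b` is the first coordinate of `g (1, 0)`; so `g` is lower
triangular with diagonal `(b, σ b)`, and it intertwines `V_a` with `V_{a'}` exactly when
`a * σ b = a' * σ⁻¹ b`.  Bijectivity makes `b` a unit, and conversely every unit `b` solving this
equation gives the diagonal isomorphism `diag (b, σ b)`. -/

section TwistedShift

variable {R : Type*} [CommSemiring R]

/-- The operator `(u, v) ↦ (0, a * σ u)` on `R × R`.  The Dieudonné module `M_a` has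
`F = twistedShift σ 1` and `V = twistedShift σ⁻¹ a`.  The twist is only a monoid homomorphism: for a
ring endomorphism `σ` the operator is `σ`-semilinear. -/
def twistedShift (σ : R →* R) (a : R) (w : R × R) : R × R :=
  (0, a * σ w.1)

theorem map_eq_fst_smul_of_map_zero_one {M : Type*} [AddCommMonoid M] [Module R M]
    {f : R × R →ₗ[R] M} (h : f (0, 1) = 0) (w : R × R) : f w = w.1 • f (1, 0) := by
  have hw : w = w.1 • (1, 0) + w.2 • (0, 1) := by simp
  calc
    f w = w.1 • f (1, 0) + w.2 • f (0, 1) := by rw [← map_smul, ← map_smul, ← map_add, ← hw]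
    _ = w.1 • f (1, 0) := by rw [h, smul_zero, add_zero]

theorem isUnit_map_one_zero {f : R × R →ₗ[R] R} (hf : Function.Surjective f)
    (h : f (0, 1) = 0) : IsUnit (f (1, 0)) := by
  obtain ⟨w, hw⟩ := hf 1
  exact .of_mul_eq_one_right w.1 ((map_eq_fst_smul_of_map_zero_one h w).symm.trans hw)

theorem semiconj_twistedShift_iff {g : R × R →ₗ[R] R × R} {e : R} (h : g (0, 1) = (0, e))
    (σ : R →* R) (a a' : R) :
    Function.Semiconj g (twistedShift σ a) (twistedShift σ a') ↔
      a * e = a' * σ (g (1, 0)).1 := by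
  have map_zero_mk (v : R) : g (0, v) = (0, v * e) := by
    simpa [h] using g.map_smul v (0, 1)
  have fst_map (w : R × R) : (g w).1 = w.1 * (g (1, 0)).1 :=
    map_eq_fst_smul_of_map_zero_one (f := .fst R R R ∘ₗ g) (by simp [h]) w
  constructor
  · intro hg
    simpa [twistedShift, map_zero_mk] using hg (1, 0)
  · intro hae w
    calc
      g (twistedShift σ a w) = (0, σ w.1 * (a * e)) := by
        rw [twistedShift, map_zero_mk, mul_assoc, mul_left_comm]
      _ = twistedShift σ a' (g w) := by
        rw [hae, twistedShift, fst_map w, map_mul, mul_left_comm]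

theorem stmt_12_general (σ ρ : R →* R) (a a' : R) :
    (∃ g : (R × R) ≃ₗ[R] R × R,
        Function.Semiconj g (twistedShift σ 1) (twistedShift σ 1) ∧
        Function.Semiconj g (twistedShift ρ a) (twistedShift ρ a')) ↔
      ∃ b : Rˣ, a' * ρ b = σ b * a := by
  constructor
  · rintro ⟨g, hF, hV⟩
    have g_zero_one : g (0, 1) = (0, σ (g (1, 0)).1) := by simpa [twistedShift] using hF (1, 0)
    obtain ⟨b, hb⟩ : IsUnit (g (1, 0)).1 :=
      isUnit_map_one_zero (f := .fst R R R ∘ₗ g.toLinearMap)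
        (Prod.fst_surjective.comp g.surjective) (congrArg Prod.fst g_zero_one)
    have hab : a * σ (g (1, 0)).1 = a' * ρ (g (1, 0)).1 :=
      (semiconj_twistedShift_iff (g := g.toLinearMap) g_zero_one ρ a a').mp hV
    exact ⟨b, by rw [hb, ← hab, mul_comm]⟩
  · rintro ⟨b, hb⟩
    let g : (R × R) ≃ₗ[R] R × R :=
      (DistribMulAction.toLinearEquiv R R b).prodCongr
        (DistribMulAction.toLinearEquiv R R (Units.map σ b))
    have g_zero_one : g.toLinearMap (0, 1) = (0, σ b) := by simp [g, Units.smul_def]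
    have g_one_zero : (g.toLinearMap (1, 0)).1 = b := by simp [g, Units.smul_def]
    exact ⟨g, (semiconj_twistedShift_iff g_zero_one σ 1 1).mpr (by rw [g_one_zero]),
      (semiconj_twistedShift_iff g_zero_one ρ a a').mpr (by rw [g_one_zero, hb, mul_comm])⟩

end TwistedShift

/-- The Dieudonné modules `M_a = (K × K, F, V_a)` with `F(u,v) = (0, σ(u))` and
`V_a(u,v) = (0, a·σ⁻¹(u))` satisfy: `M_a ≅ M_{a'}` (via a `K`-linear bijection
commuting with `F` and intertwining `V_a` with `V_{a'}`) if and only if `a'·a⁻¹`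
lies in the image of `τ(b) = σ(b)·(σ⁻¹(b))⁻¹`. -/
theorem stmt_12 (p : ℕ) [Fact p.Prime] (K : Type*) [Field K] [CharP K p] [PerfectRing K p]
    (a a' : Kˣ) :
    (∃ g : (K × K) ≃ₗ[K] K × K,
        (∀ w : K × K, g (0, w.1 ^ p) = (0, (g w).1 ^ p)) ∧
        (∀ w : K × K, g (0, (a : K) * (frobeniusEquiv K p).symm w.1) =
          (0, (a' : K) * (frobeniusEquiv K p).symm (g w).1))) ↔
    ∃ b : Kˣ, ((a' * a⁻¹ : Kˣ) : K) =
      frobeniusEquiv K p (b : K) * ((frobeniusEquiv K p).symm (b : K))⁻¹ := by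
  simpa [Function.Semiconj, twistedShift, frobenius_def, ← div_eq_mul_inv, div_eq_div_iff] using
    stmt_12_general (frobenius K p : K →* K) ((frobeniusEquiv K p).symm : K →* K) a a'
end

section
/- Let p be a prime, m a positive integer, and K a finite field of cardinality p^(2m), with Frobenius automorphism σ(x) = x^p. For a ∈ Kˣ, let M_a be the K-vector space K × K equipped with the σ-semilinear map F(u,v) = (0, σ(u)) and the σ⁻¹-semilinear map V_a(u,v) = (0, a · σ⁻¹(u)). Declare a ~ a' if there exists a K-linear bijection g : K × K → K × K with g ∘ F = F ∘ g and g ∘ V_a = V_{a'} ∘ g. Then ~ is an equivalence relation on Kˣ and the number of equivalence classes is exactly p² − 1. -/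
/-- `a ~ a'` iff the Dieudonné modules `M_a = (K × K, F, V_a)` and `M_{a'}` are
isomorphic via a `K`-linear bijection commuting with `F(u,v) = (0, u^p)` and
intertwining `V_a(u,v) = (0, a·σ⁻¹(u))` with `V_{a'}`. -/
def twistRel (p : ℕ) [Fact p.Prime] (K : Type*) [Field K] [CharP K p] [PerfectRing K p]
    (a a' : Kˣ) : Prop :=
  ∃ g : (K × K) ≃ₗ[K] K × K,
    (∀ w : K × K, g (0, w.1 ^ p) = (0, (g w).1 ^ p)) ∧
    (∀ w : K × K, g (0, (a : K) * (frobeniusEquiv K p).symm w.1) =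
      (0, (a' : K) * (frobeniusEquiv K p).symm (g w).1))

/-!
The map `F` forces every isomorphism `g : M_a ≅ M_{a'}` to preserve the line `0 × K`, so `g` acts on
the quotient by a scalar `α`. Commuting with `F` makes `g` act on the line by `σ(α)`, and then
compatibility with `V` reads `a · σ(α) = a' · σ⁻¹(α)`. Hence the classes are the cosets of the image
of `τ(α) = σ(α) / σ⁻¹(α)`. Substituting `α = σ(β)` gives `τ(α) = β ^ (p ^ 2 - 1)`, so for finite `K`
the count is the index of the subgroup of `(p ^ 2 - 1)`-th powers in the cyclic group `Kˣ`.
-/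

theorem apply_eq_fst_smul_of_apply_zero_mk {R M N : Type*} [Semiring R] [AddCommMonoid M]
    [Module R M] [AddCommMonoid N] [Module R N] {f : R × M →ₗ[R] N} (hf : ∀ v, f (0, v) = 0)
    (w : R × M) : f w = w.1 • f (1, 0) := by
  have hw : w = w.1 • ((1 : R), (0 : M)) + (0, w.2) := by ext <;> simp
  calc
    f w = f (w.1 • ((1 : R), (0 : M)) + (0, w.2)) := congrArg f hw
    _ = w.1 • f (1, 0) := by rw [map_add, map_smul, hf, add_zero]

theorem isUnit_apply_one_zero_of_surjective {R M : Type*} [CommSemiring R] [AddCommMonoid M]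
    [Module R M] {f : R × M →ₗ[R] R} (hsurj : Function.Surjective f) (hf : ∀ v, f (0, v) = 0) :
    IsUnit (f (1, 0)) := by
  obtain ⟨w, hw⟩ := hsurj 1
  rw [apply_eq_fst_smul_of_apply_zero_mk hf, smul_eq_mul] at hw
  exact IsUnit.of_mul_eq_one_right _ hw

section TwistHom

variable (p : ℕ) (R : Type*) [CommSemiring R] [ExpChar R p] [PerfectRing R p]

/-- The endomorphism `τ(α) = σ(α) · σ⁻¹(α)⁻¹` of the unit group of a perfect ring, where `σ` is the
Frobenius automorphism. The modules `M_a` are classified by its cokernel. -/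
noncomputable def twistHom : Rˣ →* Rˣ :=
  Units.map (frobeniusEquiv R p : R →* R) / Units.map ((frobeniusEquiv R p).symm : R →* R)

variable {R}

theorem mul_twistHom_eq_iff {a a' α : Rˣ} :
    a * twistHom p R α = a' ↔ (a : R) * (α : R) ^ p = a' * (frobeniusEquiv R p).symm α := by
  rw [twistHom, MonoidHom.div_apply, mul_div_assoc', div_eq_iff_eq_mul, Units.ext_iff]
  simp [frobenius_def]

variable (R)

theorem range_twistHom : (twistHom p R).range = (powMonoidHom (p ^ 2 - 1) : Rˣ →* Rˣ).range := by
  let σ : Rˣ ≃* Rˣ := Units.mapEquiv (frobeniusEquiv R p)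
  have hσ : (twistHom p R).comp (σ : Rˣ →* Rˣ) = powMonoidHom (p ^ 2 - 1) := by
    ext1 β
    have hβ : σ β = β ^ p := Units.ext (frobeniusEquiv_apply R p β)
    calc
      twistHom p R (σ β) = σ (σ β) / σ.symm (σ β) := rfl
      _ = β ^ p ^ 2 / β := by rw [σ.symm_apply_apply, hβ, map_pow, hβ, ← pow_mul, sq]
      _ = β ^ (p ^ 2 - 1) := by
        rw [pow_sub _ (Nat.one_le_pow _ _ (expChar_pos R p)), pow_one, div_eq_mul_inv]
  have hσ_top : (σ : Rˣ →* Rˣ).range = ⊤ := MonoidHom.range_eq_top.2 σ.surjective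
  rw [← hσ, MonoidHom.range_comp, hσ_top, MonoidHom.range_eq_map]

end TwistHom

section Classification

theorem fst_apply_zero_mk_eq_zero {R : Type*} [Semiring R] [IsReduced R] {p : ℕ} (hp : p ≠ 0)
    {g : R × R →ₗ[R] R × R} (hF : ∀ w : R × R, g (0, w.1 ^ p) = (0, (g w).1 ^ p)) (v : R) :
    (g (0, v)).1 = 0 := by
  have h : g (0, 0) = (0, (g (0, v)).1 ^ p) := by simpa only [zero_pow hp] using hF (0, v)
  rw [Prod.mk_zero_zero, map_zero] at h
  exact (pow_eq_zero_iff hp).1 (congrArg Prod.snd h).symm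

variable {p : ℕ} [Fact p.Prime] {K : Type*} [Field K] [CharP K p] [PerfectRing K p] {a a' : Kˣ}

theorem exists_mul_twistHom_eq_of_twistRel (h : twistRel p K a a') :
    ∃ α, a * twistHom p K α = a' := by
  obtain ⟨g, hF, hV⟩ := h
  obtain ⟨α, hα⟩ : IsUnit (g (1, 0)).1 :=
    isUnit_apply_one_zero_of_surjective (f := LinearMap.fst K K K ∘ₗ g.toLinearMap)
      (Prod.fst_surjective.comp g.surjective)
      (fst_apply_zero_mk_eq_zero (g := g.toLinearMap) (NeZero.ne p) hF)
  have hF₁ : g (0, 1) = (0, (α : K) ^ p) := by simpa [← hα] using hF (1, 0)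
  have hV₁ : g (0, a) = (0, a' * (frobeniusEquiv K p).symm α) := by simpa [← hα] using hV (1, 0)
  refine ⟨α, (mul_twistHom_eq_iff p).2 ?_⟩
  calc
    (a : K) * (α : K) ^ p = ((a : K) • g (0, 1)).2 := by rw [hF₁, Prod.smul_snd, smul_eq_mul]
    _ = (g (0, a)).2 := by rw [← map_smul, Prod.smul_mk, smul_zero, smul_eq_mul, mul_one]
    _ = a' * (frobeniusEquiv K p).symm α := by rw [hV₁]

theorem twistRel_of_mul_twistHom_eq {α : Kˣ} (h : a * twistHom p K α = a') :
    twistRel p K a a' := by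
  rw [mul_twistHom_eq_iff] at h
  refine ⟨.prodCongr (.smulOfNeZero K K (α : K) α.ne_zero)
    (.smulOfNeZero K K ((α : K) ^ p) (pow_ne_zero p α.ne_zero)), fun w ↦ ?_, fun w ↦ ?_⟩
  · ext
    · simp
    · simp [mul_pow]
  · ext
    · simp
    · simp only [LinearEquiv.prodCongr_apply, LinearEquiv.smulOfNeZero_apply, smul_eq_mul,
        map_mul]
      linear_combination (frobeniusEquiv K p).symm w.1 * h

variable (p K)

theorem twistRel_eq_leftRel : twistRel p K = QuotientGroup.leftRel (twistHom p K).range := by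
  ext a a'
  rw [QuotientGroup.leftRel_apply, MonoidHom.mem_range]
  simp only [eq_inv_mul_iff_mul_eq]
  exact ⟨exists_mul_twistHom_eq_of_twistRel, fun ⟨_, h⟩ ↦ twistRel_of_mul_twistHom_eq h⟩

theorem equivalence_twistRel : Equivalence (twistRel p K) :=
  twistRel_eq_leftRel p K ▸ (QuotientGroup.leftRel (twistHom p K).range).iseqv

theorem natCard_quot_twistRel :
    Nat.card (Quot (twistRel p K)) = (powMonoidHom (p ^ 2 - 1) : Kˣ →* Kˣ).range.index := by
  rw [twistRel_eq_leftRel, range_twistHom]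
  rfl

end Classification

theorem stmt_13_general (p n : ℕ) [Fact p.Prime] (K : Type*) [Field K] [Finite K] [CharP K p]
    [PerfectRing K p] (hK : Nat.card K = p ^ n) :
    Equivalence (twistRel p K) ∧ Nat.card (Quot (twistRel p K)) = p ^ n.gcd 2 - 1 := by
  refine ⟨equivalence_twistRel p K, ?_⟩
  calc
    Nat.card (Quot (twistRel p K)) = (powMonoidHom (p ^ 2 - 1) : Kˣ →* Kˣ).range.index :=
      natCard_quot_twistRel p K
    _ = (p ^ n - 1).gcd (p ^ 2 - 1) := by
      rw [IsCyclic.index_powMonoidHom_range, Nat.card_units, hK]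
    _ = p ^ n.gcd 2 - 1 := Nat.pow_sub_one_gcd_pow_sub_one p n 2

/-- For a finite field `K` of cardinality `p^(2m)`, the relation `~` on `Kˣ` given by
isomorphism of the Dieudonné modules `M_a` is an equivalence relation with exactly
`p² − 1` equivalence classes. -/
theorem stmt_13 (p m : ℕ) [Fact p.Prime] (hm : 0 < m) (K : Type*) [Field K] [Fintype K]
    [CharP K p] [PerfectRing K p] (hK : Fintype.card K = p ^ (2 * m)) :
    Equivalence (twistRel p K) ∧ Nat.card (Quot (twistRel p K)) = p ^ 2 - 1 := by
  simpa using stmt_13_general p (2 * m) K (by rw [Nat.card_eq_fintype_card, hK])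
end
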